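/- arXiv:2410.05929 — 2 statements merged into one kernel-verified Lean document; each statement's English description precedes it below -/
import Mathlib

section
/- There exists an infinitely differentiable surjective map φ(x,y) = (φ₁(x), φ₂(x,y)) : [0,1]² → [0,1]² such that φ(0,y) = (0,y) and φ(1,y) = (1,y) for all y ∈ [0,1], ∂φ₂/∂y(x,y) ≥ 0 for all (x,y), and with the following property: for every normed real vector space E and every map F : [0,1]² → E whose restriction to {(x,y) ∈ [0,1]² : x ≤ y} is infinitely differentiable and whose restriction to {(x,y) ∈ [0,1]² : x ≥ y} is infinitely differentiable, the composite F ∘ φ is infinitely differentiable on [0,1]². -/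
open Set

/-- The first component: a smooth step supported on `[2/5, 3/5]`. -/
noncomputable def diagS (x : ℝ) : ℝ := Real.smoothTransition (5 * x - 2)

/-- The homotopy parameter: zero at `0` and `1`, one on `[1/5, 4/5]`. -/
noncomputable def diagT (x : ℝ) : ℝ :=
  Real.smoothTransition (5 * x) * Real.smoothTransition (5 - 5 * x)

/-- The second component. -/
noncomputable def diagPhi (p : ℝ × ℝ) : ℝ :=
  (1 - diagT p.1) * p.2 + diagT p.1 *
    (diagS p.1 * Real.smoothTransition (3 * p.2)
      + (1 - diagS p.1) * Real.smoothTransition (3 * p.2 - 2))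

lemma diagS_mem (x : ℝ) : 0 ≤ diagS x ∧ diagS x ≤ 1 :=
  ⟨Real.smoothTransition.nonneg _, Real.smoothTransition.le_one _⟩

lemma diagT_mem (x : ℝ) : 0 ≤ diagT x ∧ diagT x ≤ 1 :=
  ⟨mul_nonneg (Real.smoothTransition.nonneg _) (Real.smoothTransition.nonneg _),
    mul_le_one₀ (Real.smoothTransition.le_one _) (Real.smoothTransition.nonneg _)
      (Real.smoothTransition.le_one _)⟩

lemma diagS_contDiff : ContDiff ℝ (⊤ : ℕ∞) diagS := by
  unfold diagS
  fun_prop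

lemma diagPhi_contDiff : ContDiff ℝ (⊤ : ℕ∞) diagPhi := by
  unfold diagPhi diagT diagS
  fun_prop

lemma diagPhi_mono (x : ℝ) : Monotone (fun y => diagPhi (x, y)) := by
  intro y z hyz
  have hS := diagS_mem x
  have hT := diagT_mem x
  have h1 : Real.smoothTransition (3 * y) ≤ Real.smoothTransition (3 * z) :=
    Real.smoothTransition.monotone (by linarith)
  have h2 : Real.smoothTransition (3 * y - 2) ≤ Real.smoothTransition (3 * z - 2) :=
    Real.smoothTransition.monotone (by linarith)
  have h3 : 0 ≤ 1 - diagS x := by linarith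
  have h4 : 0 ≤ 1 - diagT x := by linarith
  have h5 := hS.1
  have h6 := hT.1
  simp only [diagPhi]
  gcongr

lemma diagPhi_zero (x : ℝ) : diagPhi (x, 0) = 0 := by
  simp [diagPhi]

lemma diagPhi_one (x : ℝ) : diagPhi (x, 1) = 1 := by
  have h1 : Real.smoothTransition (3 * 1) = 1 :=
    Real.smoothTransition.one_of_one_le (by norm_num)
  have h2 : Real.smoothTransition (3 * 1 - 2) = 1 :=
    Real.smoothTransition.one_of_one_le (by norm_num)
  simp only [diagPhi, h1, h2]
  ring

lemma diagPhi_mem (x y : ℝ) (hy : y ∈ Icc (0:ℝ) 1) : diagPhi (x, y) ∈ Icc (0:ℝ) 1 := by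
  constructor
  · rw [← diagPhi_zero x]
    exact diagPhi_mono x hy.1
  · rw [← diagPhi_one x]
    exact diagPhi_mono x hy.2

lemma diagS_zero {x : ℝ} (hx : x ≤ 2 / 5) : diagS x = 0 :=
  Real.smoothTransition.zero_of_nonpos (by linarith)

lemma diagS_one {x : ℝ} (hx : 3 / 5 ≤ x) : diagS x = 1 :=
  Real.smoothTransition.one_of_one_le (by linarith)

lemma diagT_one {x : ℝ} (hx : 1 / 5 ≤ x) (hx' : x ≤ 4 / 5) : diagT x = 1 := by
  unfold diagT
  rw [Real.smoothTransition.one_of_one_le (by linarith),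
    Real.smoothTransition.one_of_one_le (by linarith), one_mul]

lemma diagPhi_le {x y : ℝ} (hx : 1 / 5 ≤ x) (hx' : x ≤ 4 / 5) (hy : y ≤ 2 / 3) :
    diagPhi (x, y) ≤ diagS x := by
  have h := Real.smoothTransition.zero_of_nonpos (x := 3 * y - 2) (by linarith)
  simp only [diagPhi, diagT_one hx hx', h]
  nlinarith [diagS_mem x, Real.smoothTransition.le_one (3 * y)]

lemma le_diagPhi {x y : ℝ} (hx : 1 / 5 ≤ x) (hx' : x ≤ 4 / 5) (hy : 1 / 3 ≤ y) :
    diagS x ≤ diagPhi (x, y) := by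
  have h := Real.smoothTransition.one_of_one_le (x := 3 * y) (by linarith)
  simp only [diagPhi, diagT_one hx hx', h]
  nlinarith [diagS_mem x, Real.smoothTransition.nonneg (3 * y - 2)]

theorem smoothing_out_the_diagonal :
    ∃ (φ₁ : ℝ → ℝ) (φ₂ : ℝ × ℝ → ℝ),
      ContDiffOn ℝ (⊤ : ℕ∞) (fun p : ℝ × ℝ => (φ₁ p.1, φ₂ p)) (Icc (0:ℝ) 1 ×ˢ Icc (0:ℝ) 1) ∧
      MapsTo (fun p : ℝ × ℝ => (φ₁ p.1, φ₂ p))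
        (Icc (0:ℝ) 1 ×ˢ Icc (0:ℝ) 1) (Icc (0:ℝ) 1 ×ˢ Icc (0:ℝ) 1) ∧
      SurjOn (fun p : ℝ × ℝ => (φ₁ p.1, φ₂ p))
        (Icc (0:ℝ) 1 ×ˢ Icc (0:ℝ) 1) (Icc (0:ℝ) 1 ×ˢ Icc (0:ℝ) 1) ∧
      (∀ y ∈ Icc (0:ℝ) 1, φ₁ 0 = 0 ∧ φ₂ (0, y) = y) ∧
      (∀ y ∈ Icc (0:ℝ) 1, φ₁ 1 = 1 ∧ φ₂ (1, y) = y) ∧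
      (∀ x ∈ Icc (0:ℝ) 1, ∀ y ∈ Icc (0:ℝ) 1,
        0 ≤ derivWithin (fun y' => φ₂ (x, y')) (Icc (0:ℝ) 1) y) ∧
      (∀ (E : Type) [NormedAddCommGroup E] [NormedSpace ℝ E] (F : ℝ × ℝ → E),
        ContDiffOn ℝ (⊤ : ℕ∞) F {p : ℝ × ℝ | p ∈ Icc (0:ℝ) 1 ×ˢ Icc (0:ℝ) 1 ∧ p.1 ≤ p.2} →
        ContDiffOn ℝ (⊤ : ℕ∞) F {p : ℝ × ℝ | p ∈ Icc (0:ℝ) 1 ×ˢ Icc (0:ℝ) 1 ∧ p.2 ≤ p.1} →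
        ContDiffOn ℝ (⊤ : ℕ∞) (F ∘ fun p : ℝ × ℝ => (φ₁ p.1, φ₂ p))
          (Icc (0:ℝ) 1 ×ˢ Icc (0:ℝ) 1)) := by
  have hc : ContDiff ℝ (⊤ : ℕ∞) (fun p : ℝ × ℝ => (diagS p.1, diagPhi p)) :=
    (diagS_contDiff.comp contDiff_fst).prodMk diagPhi_contDiff
  have hmaps : MapsTo (fun p : ℝ × ℝ => (diagS p.1, diagPhi p))
        (Icc (0:ℝ) 1 ×ˢ Icc (0:ℝ) 1) (Icc (0:ℝ) 1 ×ˢ Icc (0:ℝ) 1) :=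
    fun p hp => ⟨diagS_mem p.1, diagPhi_mem p.1 p.2 hp.2⟩
  refine ⟨diagS, diagPhi, hc.contDiffOn, hmaps, ?_, ?_, ?_, ?_, ?_⟩
  · rintro ⟨u, v⟩ ⟨hu, hv⟩
    obtain ⟨x, hx, hxu⟩ : u ∈ diagS '' Icc 0 1 := by
      apply intermediate_value_Icc zero_le_one diagS_contDiff.continuous.continuousOn
      rw [diagS_zero (by norm_num), diagS_one (by norm_num)]
      exact hu
    have hcy : Continuous (fun y => diagPhi (x, y)) :=
      diagPhi_contDiff.continuous.comp (by fun_prop)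
    obtain ⟨y, hy, hyv⟩ : v ∈ (fun y => diagPhi (x, y)) '' Icc 0 1 := by
      apply intermediate_value_Icc zero_le_one hcy.continuousOn
      simp only [diagPhi_zero, diagPhi_one]
      exact hv
    exact ⟨(x, y), ⟨hx, hy⟩, Prod.ext hxu hyv⟩
  · intro y _
    exact ⟨diagS_zero (by norm_num), by simp [diagPhi, diagT]⟩
  · intro y _
    exact ⟨diagS_one (by norm_num), by simp [diagPhi, diagT]⟩
  · intro x _ y _
    exact ((diagPhi_mono x).monotoneOn _).derivWithin_nonneg
  · intro E _ _ F hF1 hF2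
    have up : ∀ U : Set (ℝ × ℝ), (∀ p ∈ U, p.2 ∈ Icc (0:ℝ) 1 → diagS p.1 ≤ diagPhi p) →
        ContDiffOn ℝ (⊤ : ℕ∞) (F ∘ fun p : ℝ × ℝ => (diagS p.1, diagPhi p))
          ((Icc (0:ℝ) 1 ×ˢ Icc (0:ℝ) 1) ∩ U) := fun U hU =>
      hF1.comp hc.contDiffOn fun p hp => ⟨hmaps hp.1, hU p hp.2 hp.1.2⟩
    have down : ∀ U : Set (ℝ × ℝ), (∀ p ∈ U, p.2 ∈ Icc (0:ℝ) 1 → diagPhi p ≤ diagS p.1) →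
        ContDiffOn ℝ (⊤ : ℕ∞) (F ∘ fun p : ℝ × ℝ => (diagS p.1, diagPhi p))
          ((Icc (0:ℝ) 1 ×ˢ Icc (0:ℝ) 1) ∩ U) := fun U hU =>
      hF2.comp hc.contDiffOn fun p hp => ⟨hmaps hp.1, hU p hp.2 hp.1.2⟩
    refine contDiffOn_of_locally_contDiffOn fun p hp => ?_
    by_cases h1 : p.1 < 2 / 5
    · refine ⟨{q | q.1 < 2 / 5}, isOpen_lt (by fun_prop) (by fun_prop), h1, up _ ?_⟩
      intro q hq hq2
      rw [diagS_zero (le_of_lt hq)]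
      exact (diagPhi_mem q.1 q.2 hq2).1
    by_cases h2 : 3 / 5 < p.1
    · refine ⟨{q | 3 / 5 < q.1}, isOpen_lt (by fun_prop) (by fun_prop), h2, down _ ?_⟩
      intro q hq hq2
      rw [diagS_one (le_of_lt hq)]
      exact (diagPhi_mem q.1 q.2 hq2).2
    by_cases h3 : p.2 < 2 / 3
    · refine ⟨{q | 1 / 5 < q.1} ∩ {q | q.1 < 4 / 5} ∩ {q | q.2 < 2 / 3},
        ((isOpen_lt (by fun_prop) (by fun_prop)).inter
          (isOpen_lt (by fun_prop) (by fun_prop))).inter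
          (isOpen_lt (by fun_prop) (by fun_prop)),
        ⟨⟨?_, ?_⟩, h3⟩, down _ ?_⟩
      · show 1 / 5 < p.1
        linarith
      · show p.1 < 4 / 5
        linarith
      · rintro q ⟨⟨ha, hb⟩, hd⟩ _
        exact diagPhi_le (le_of_lt ha) (le_of_lt hb) (le_of_lt hd)
    · refine ⟨{q | 1 / 5 < q.1} ∩ {q | q.1 < 4 / 5} ∩ {q | 1 / 3 < q.2},
        ((isOpen_lt (by fun_prop) (by fun_prop)).inter
          (isOpen_lt (by fun_prop) (by fun_prop))).inter
          (isOpen_lt (by fun_prop) (by fun_prop)),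
        ⟨⟨?_, ?_⟩, ?_⟩, up _ ?_⟩
      · show 1 / 5 < p.1
        linarith
      · show p.1 < 4 / 5
        linarith
      · show 1 / 3 < p.2
        linarith
      · rintro q ⟨⟨ha, hb⟩, hd⟩ _
        exact le_diagPhi (le_of_lt ha) (le_of_lt hb) (le_of_lt hd)
end

section
/- Let h be a framing datum with image A = h(ℝ × [0,1]) and associated path X, and assume the topological frontier of A in ℂ is contained in h(ℝ × {0}) ∪ h(ℝ × {1}). Let f : ℝ × ℝ → ℂ be X-holomorphic on ℝ × [0,1] with f(θ + 2π, t) = f(θ, t). Then there exists a unique continuous map g : A → ℂ such that f(θ, t) = g(h(θ, t)) for all θ ∈ ℝ and t ∈ [0,1]; moreover θ ↦ g(h(θ, 0)) and θ ↦ g(h(θ, 1)) are infinitely differentiable. -/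
open Set Complex Real

/-- partial derivative in the first variable -/
noncomputable def pd1 (h : ℝ × ℝ → ℂ) (p : ℝ × ℝ) : ℂ := fderiv ℝ h p (1, 0)
/-- partial derivative in the second variable -/
noncomputable def pd2 (h : ℝ × ℝ → ℂ) (p : ℝ × ℝ) : ℂ := fderiv ℝ h p (0, 1)

lemma pd1_cont {h : ℝ × ℝ → ℂ} (hs : ContDiff ℝ 1 h) : Continuous (pd1 h) :=
  (hs.continuous_fderiv one_ne_zero).clm_apply continuous_const

lemma pd2_cont {h : ℝ × ℝ → ℂ} (hs : ContDiff ℝ 1 h) : Continuous (pd2 h) :=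
  (hs.continuous_fderiv one_ne_zero).clm_apply continuous_const

lemma pd_fderiv (h : ℝ × ℝ → ℂ) (p v : ℝ × ℝ) :
    fderiv ℝ h p v = v.1 * pd1 h p + v.2 * pd2 h p := by
  have : v = v.1 • ((1 : ℝ), (0 : ℝ)) + v.2 • ((0 : ℝ), (1 : ℝ)) := by
    ext <;> simp
  conv_lhs => rw [this]
  rw [map_add, map_smul, map_smul]
  simp [pd1, pd2]

lemma pd1_hasDerivAt {h : ℝ × ℝ → ℂ} (hs : ContDiff ℝ 1 h) (θ t : ℝ) :
    HasDerivAt (fun x => h (x, t)) (pd1 h (θ, t)) θ := by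
  have h1 := (hs.differentiable one_ne_zero (θ, t)).hasFDerivAt
  have h2 : HasDerivAt (fun x : ℝ => (x, t)) ((1 : ℝ), (0 : ℝ)) θ :=
    (hasDerivAt_id θ).prodMk (hasDerivAt_const θ t)
  exact h1.comp_hasDerivAt θ h2

lemma pd2_hasDerivAt {h : ℝ × ℝ → ℂ} (hs : ContDiff ℝ 1 h) (θ t : ℝ) :
    HasDerivAt (fun x => h (θ, x)) (pd2 h (θ, t)) t := by
  have h1 := (hs.differentiable one_ne_zero (θ, t)).hasFDerivAt
  have h2 : HasDerivAt (fun x : ℝ => (θ, x)) ((0 : ℝ), (1 : ℝ)) t :=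
    (hasDerivAt_const t θ).prodMk (hasDerivAt_id t)
  exact h1.comp_hasDerivAt t h2

lemma per_int {h : ℝ × ℝ → ℂ} (hper : ∀ θ t, h (θ + 2 * π, t) = h (θ, t)) (n : ℤ) (θ t : ℝ) :
    h (θ + n * (2 * π), t) = h (θ, t) := by
  have : Function.Periodic (fun θ => h (θ, t)) (2 * π) := fun θ => hper θ t
  exact this.int_mul n θ

lemma pd1_per {h : ℝ × ℝ → ℂ} (hs : ContDiff ℝ 1 h)
    (hper : ∀ θ t, h (θ + 2 * π, t) = h (θ, t)) (θ t : ℝ) :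
    pd1 h (θ + 2 * π, t) = pd1 h (θ, t) := by
  have h1 := (pd1_hasDerivAt hs (θ + 2 * π) t).comp_add_const θ (2 * π)
  have h2 : (fun x => h (x + 2 * π, t)) = fun x => h (x, t) := by
    funext x; exact hper x t
  rw [h2] at h1
  exact h1.unique (pd1_hasDerivAt hs θ t)

/-- representatives -/
lemma exists_rep (θ c : ℝ) : ∃ n : ℤ, θ + n * (2 * π) ∈ Ico (c - π) (c + π) := by
  obtain ⟨n, hn, -⟩ := existsUnique_add_zsmul_mem_Ico Real.two_pi_pos θ (c - π)
  refine ⟨n, ?_⟩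
  simp only [zsmul_eq_mul] at hn
  rw [show c + π = c - π + 2 * π by ring]
  exact hn

/-- The logarithmic integral of a nonvanishing loop is constant over a connected parameter space. -/
lemma winding_const {P : Type*} [TopologicalSpace P] [PreconnectedSpace P]
    (u v : P → ℝ → ℂ) (hu : Continuous (Function.uncurry u)) (hv : Continuous (Function.uncurry v))
    (hd : ∀ p x, HasDerivAt (u p) (v p x) x) (hp : ∀ p, u p (2 * π) = u p 0)
    (h0 : ∀ p x, u p x ≠ 0) (p q : P) :
    ∫ x in (0 : ℝ)..(2 * π), v p x / u p x = ∫ x in (0 : ℝ)..(2 * π), v q x / u q x := by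
  have hcont : Continuous (Function.uncurry fun p x => v p x / u p x) := by
    exact hv.div hu (fun x => h0 x.1 x.2)
  have hJ := intervalIntegral.continuous_parametric_intervalIntegral_of_continuous'
    (μ := MeasureTheory.volume) hcont 0 (2 * π)
  have hint : ∀ p, ∃ n : ℤ, ∫ x in (0 : ℝ)..(2 * π), v p x / u p x = n * (2 * π * I) := by
    intro p
    rw [← Complex.exp_eq_one_iff]
    have hc1 : Continuous (fun x => v p x / u p x) := by
      exact hcont.comp (Continuous.prodMk continuous_const continuous_id)
    have hder : ∀ y, HasDerivAt (fun y => u p y * cexp (-∫ x in (0 : ℝ)..y, v p x / u p x)) 0 y := by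
      intro y
      have e1 := (intervalIntegral.integral_hasDerivAt_right (hc1.intervalIntegrable 0 y)
        (hc1.stronglyMeasurableAtFilter _ _) hc1.continuousAt)
      have e2 := (hd p y).mul e1.neg.cexp
      refine HasDerivAt.congr_deriv (f := fun y => u p y * cexp (-∫ x in (0 : ℝ)..y, v p x / u p x))
        e2 ?_
      have e3 : u p y * (v p y / u p y) = v p y := mul_div_cancel₀ _ (h0 p y)
      linear_combination -(cexp (-∫ x in (0 : ℝ)..y, v p x / u p x)) * e3
    have hc := is_const_of_deriv_eq_zero (fun y => (hder y).differentiableAt)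
      (fun y => (hder y).deriv) (2 * π) 0
    simp only [intervalIntegral.integral_same, neg_zero, Complex.exp_zero, mul_one, hp] at hc
    have h3 := mul_left_cancel₀ (h0 p 0) (hc.trans (mul_one _).symm)
    rw [Complex.exp_neg, inv_eq_one] at h3
    exact h3
  choose n hn using hint
  have hne : (2 * π * I : ℂ) ≠ 0 := by
    simp [Real.pi_ne_zero]
  have hnc : Continuous n := by
    rw [Int.isClosedEmbedding_coe_real.isInducing.continuous_iff]
    have : (Int.cast ∘ n : P → ℝ) = fun p => ((∫ x in (0 : ℝ)..(2 * π), v p x / u p x) / (2 * π * I)).re := by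
      funext p
      rw [hn p, mul_div_cancel_right₀ _ hne]
      simp
    rw [this]
    exact Complex.continuous_re.comp (hJ.div_const _)
  rw [hn p, hn q, PreconnectedSpace.constant inferInstance hnc (x := p) (y := q)]

lemma dist_mono (k : ℝ × ℝ → ℂ) (hk : ContDiff ℝ 1 k)
    (hper : ∀ θ t, k (θ + 2 * π, t) = k (θ, t)) (z : ℂ) (δ : ℝ)
    (hyp : ∀ t ∈ Ico (0:ℝ) δ, ∀ θ, (∀ θ', ‖k (θ, t) - z‖ ≤ ‖k (θ', t) - z‖) →
      inner ℝ (k (θ, t) - z) (pd2 k (θ, t)) ≤ 0)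
    (h0 : ∃ θ, k (θ, 0) = z) : ∀ t ∈ Icc (0:ℝ) δ, ∃ θ, k (θ, t) = z := by
  have hkc := hk.continuous
  set E : ℝ → ℝ := fun t => sInf ((fun θ => ‖k (θ, t) - z‖ ^ 2) '' Icc 0 (2 * π)) with hE
  have hEc : Continuous E := by
    apply IsCompact.continuous_sInf (f := fun t θ => ‖k (θ, t) - z‖ ^ 2) isCompact_Icc
    show Continuous (fun p : ℝ × ℝ => ‖k (p.2, p.1) - z‖ ^ 2)
    fun_prop
  have hmin : ∀ t, ∃ θ, E t = ‖k (θ, t) - z‖ ^ 2 ∧ ∀ θ', ‖k (θ, t) - z‖ ^ 2 ≤ ‖k (θ', t) - z‖ ^ 2 := by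
    intro t
    obtain ⟨θ, hθ, h1, h2⟩ := (isCompact_Icc (a := (0:ℝ)) (b := 2 * π)).exists_sInf_image_eq_and_le
      (f := fun θ => ‖k (θ, t) - z‖ ^ 2)
      (nonempty_Icc.2 Real.two_pi_pos.le) (by fun_prop)
    refine ⟨θ, h1, fun θ' => ?_⟩
    obtain ⟨n, hn⟩ := exists_rep θ' π
    rw [← per_int hper n θ' t]
    exact h2 _ ⟨by linarith [hn.1], by linarith [hn.2]⟩
  have hle : ∀ t θ', E t ≤ ‖k (θ', t) - z‖ ^ 2 := by
    intro t θ'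
    obtain ⟨θ, h1, h2⟩ := hmin t
    rw [h1]; exact h2 θ'
  have main : ∀ ⦃x⦄, x ∈ Icc 0 δ → E x ≤ 0 := by
    apply image_le_of_liminf_slope_right_le_deriv_boundary (B := fun _ => 0) (B' := fun _ => 0)
      hEc.continuousOn
    · obtain ⟨θ, h0⟩ := h0
      simpa [h0] using hle 0 θ
    · exact continuousOn_const
    · intro x _; exact hasDerivWithinAt_const _ _ _
    · intro x hx r hr
      obtain ⟨θ, h1, h2⟩ := hmin x
      have hd := ((pd2_hasDerivAt hk θ x).sub_const z).norm_sq
      have hneg := hyp x hx θ (fun θ' => by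
        have := h2 θ'
        exact (pow_le_pow_iff_left₀ (norm_nonneg _) (norm_nonneg _) two_ne_zero).1 this)
      have hs := (hasDerivWithinAt_iff_tendsto_slope' (s := Ioi x) (by simp)).1 hd.hasDerivWithinAt
      have hev := hs.eventually (gt_mem_nhds (show _ < r by linarith))
      apply Filter.Eventually.frequently
      filter_upwards [hev, self_mem_nhdsWithin] with y hy hxy
      refine lt_of_le_of_lt ?_ hy
      rw [slope_def_field, slope_def_field]
      have : 0 < y - x := sub_pos.2 hxy
      gcongr
      · exact hle y θ
      · exact h1.symm.le
  intro t ht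
  obtain ⟨θ, h1, -⟩ := hmin t
  have := main ht
  rw [h1] at this
  refine ⟨θ, ?_⟩
  have h3 : ‖k (θ, t) - z‖ = 0 := by
    have := le_antisymm this (sq_nonneg _)
    exact pow_eq_zero_iff two_ne_zero |>.1 this
  exact sub_eq_zero.1 (norm_eq_zero.1 h3)

lemma inj_mod {h : ℝ × ℝ → ℂ} (hper : ∀ θ t, h (θ + 2 * π, t) = h (θ, t)) {t : ℝ}
    (hinj : InjOn (fun θ => h (θ, t)) (Ico 0 (2 * π))) {θ θ' : ℝ} (he : h (θ, t) = h (θ', t)) :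
    ∃ n : ℤ, θ' = θ + n * (2 * π) := by
  obtain ⟨n, hn⟩ := exists_rep θ π
  obtain ⟨n', hn'⟩ := exists_rep θ' π
  have h1 : Ico (π - π) (π + π) = Ico 0 (2 * π) := by
    rw [sub_self, two_mul]
  rw [h1] at hn hn'
  have := hinj hn hn' (by simp only [per_int hper]; exact he)
  refine ⟨n - n', ?_⟩
  push_cast
  linarith

lemma tube (h : ℝ × ℝ → ℂ) (hs : ContDiff ℝ 1 h)
    (hper : ∀ θ t, h (θ + 2 * π, t) = h (θ, t))
    (hinj : ∀ t ∈ Icc (0:ℝ) 1, InjOn (fun θ => h (θ, t)) (Ico 0 (2 * π)))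
    (hne : ∀ θ : ℝ, ∀ t ∈ Icc (0:ℝ) 1, pd1 h (θ, t) ≠ 0) :
    ∃ ε₀ > 0, ∃ c > 0, ∃ m > 0, (∀ θ : ℝ, ∀ t ∈ Icc (0:ℝ) 1, m ≤ ‖pd1 h (θ, t)‖) ∧
      ∀ t ∈ Icc (0:ℝ) 1, ∀ θ x ε : ℝ, |x| ≤ π → |ε| ≤ ε₀ →
        c * (|x| + |ε|) ≤ ‖h (θ + x, t) - h (θ, t) - ε * I * pd1 h (θ, t)‖ := by
  have hc := hs.continuous
  have hc1 := pd1_cont hs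
  have hpi := Real.pi_pos
  have hpp : ∀ (n : ℤ) (θ t : ℝ), pd1 h (θ + n * (2 * π), t) = pd1 h (θ, t) :=
    fun n θ t => per_int (pd1_per hs hper) n θ t
  -- m and M
  have hK : IsCompact (Icc (0:ℝ) (2 * π) ×ˢ Icc (0:ℝ) 1) := isCompact_Icc.prod isCompact_Icc
  have hKne : (Icc (0:ℝ) (2 * π) ×ˢ Icc (0:ℝ) 1).Nonempty :=
    ⟨(0, 0), ⟨by simp; positivity, by simp⟩⟩
  obtain ⟨p, hp, hpmin⟩ := hK.exists_isMinOn hKne hc1.norm.continuousOn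
  obtain ⟨q, hq, hqmax⟩ := hK.exists_isMaxOn hKne hc1.norm.continuousOn
  set m := ‖pd1 h p‖ with hm
  set M := ‖pd1 h q‖ with hM
  have hm0 : 0 < m := norm_pos_iff.2 (hne p.1 p.2 hp.2)
  have hM0 : 0 < M := norm_pos_iff.2 (hne q.1 q.2 hq.2)
  have hmle : ∀ θ : ℝ, ∀ t ∈ Icc (0:ℝ) 1, m ≤ ‖pd1 h (θ, t)‖ := by
    intro θ t ht
    obtain ⟨n, hn⟩ := exists_rep θ π
    rw [← hpp n θ t]
    exact hpmin (a := (θ + n * (2 * π), t)) ⟨⟨by linarith [hn.1], by linarith [hn.2]⟩, ht⟩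
  have hMle : ∀ θ : ℝ, ∀ t ∈ Icc (0:ℝ) 1, ‖pd1 h (θ, t)‖ ≤ M := by
    intro θ t ht
    obtain ⟨n, hn⟩ := exists_rep θ π
    rw [← hpp n θ t]
    exact hqmax (a := (θ + n * (2 * π), t)) ⟨⟨by linarith [hn.1], by linarith [hn.2]⟩, ht⟩
  -- δ
  have hK2 : IsCompact (Icc (-1:ℝ) (2 * π + 1) ×ˢ Icc (0:ℝ) 1) := isCompact_Icc.prod isCompact_Icc
  have huc := hK2.uniformContinuousOn_of_continuous hc1.continuousOn
  obtain ⟨δ', hδ', huc⟩ := Metric.uniformContinuousOn_iff_le.1 huc (m / 2) (by positivity)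
  set δ := min δ' 1 with hδ
  have hδ0 : 0 < δ := lt_min hδ' one_pos
  have hsmall : ∀ θ ∈ Icc (0:ℝ) (2 * π), ∀ t ∈ Icc (0:ℝ) 1, ∀ x, |x| ≤ δ →
      ‖h (θ + x, t) - h (θ, t) - x * pd1 h (θ, t)‖ ≤ m / 2 * |x| := by
    intro θ hθ t ht x hx
    have hb := Convex.norm_image_sub_le_of_norm_hasDerivWithin_le (𝕜 := ℝ)
      (f := fun y => h (y, t) - (y : ℂ) * pd1 h (θ, t))
      (f' := fun y => pd1 h (y, t) - pd1 h (θ, t)) (s := Icc (θ - δ) (θ + δ))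
      (x := θ) (y := θ + x) (C := m / 2) ?_ ?_ (convex_Icc _ _) ?_ ?_
    · simp only [add_sub_cancel_left, Real.norm_eq_abs] at hb
      refine le_trans (le_of_eq ?_) hb
      congr 1
      push_cast
      ring
    · intro y hy
      have := (pd1_hasDerivAt hs y t).sub (((hasDerivAt_id y).ofReal_comp).mul_const (pd1 h (θ, t)))
      simp only [id, ofReal_one, one_mul] at this
      exact this.hasDerivWithinAt
    · intro y hy
      have hδ1 : δ ≤ 1 := min_le_right _ _
      have hd := huc (y, t) ⟨⟨by linarith [hy.1, hθ.1], by linarith [hy.2, hθ.2]⟩, ht⟩ (θ, t)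
        ⟨⟨by linarith [hθ.1], by linarith [hθ.2]⟩, ht⟩ ?_
      · rwa [dist_eq_norm] at hd
      · rw [Prod.dist_eq]
        simp only [dist_self]
        rw [Real.dist_eq]
        refine max_le ?_ hδ'.le
        refine le_trans ?_ (min_le_left δ' 1)
        rw [abs_le]
        constructor <;> linarith [hy.1, hy.2]
    · constructor <;> linarith
    · rw [abs_le] at hx
      constructor <;> linarith [hx.1, hx.2]
  -- η
  have hK3 : IsCompact ((Icc (0:ℝ) (2 * π) ×ˢ Icc (0:ℝ) 1) ×ˢ (Icc (-π) π ∩ {x | δ ≤ |x|})) :=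
    hK.prod (isCompact_Icc.inter_right (isClosed_le continuous_const continuous_abs))
  have hδpi : δ ≤ π := (min_le_right _ _).trans (by linarith [Real.pi_gt_three])
  have hK3ne : ((Icc (0:ℝ) (2 * π) ×ˢ Icc (0:ℝ) 1) ×ˢ (Icc (-π) π ∩ {x | δ ≤ |x|})).Nonempty :=
    hKne.prod ⟨π, ⟨by linarith, le_rfl⟩, by simpa [abs_of_pos hpi] using hδpi⟩
  obtain ⟨r, hr, hrmin⟩ := hK3.exists_isMinOn hK3ne
    (f := fun r : (ℝ × ℝ) × ℝ => ‖h (r.1.1 + r.2, r.1.2) - h (r.1.1, r.1.2)‖)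
    (by fun_prop)
  set η := ‖h (r.1.1 + r.2, r.1.2) - h (r.1.1, r.1.2)‖ with hη
  have hη0 : 0 < η := by
    rw [hη, norm_pos_iff, sub_ne_zero]
    intro he
    obtain ⟨n, hn⟩ := inj_mod hper (hinj r.1.2 hr.1.2) he
    have h1 : |r.2| ≤ π := abs_le.2 hr.2.1
    have h2 : δ ≤ |r.2| := hr.2.2
    have h3 : r.2 = -(n * (2 * π)) := by linarith
    rw [h3, abs_neg, abs_mul, abs_of_pos Real.two_pi_pos] at h1 h2
    have h4 : |(n:ℝ)| < 1 := by
      by_contra hcon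
      push Not at hcon
      nlinarith
    have h5 : n = 0 := by
      rw [← Int.cast_abs] at h4
      have : |n| < 1 := by exact_mod_cast h4
      exact Int.abs_lt_one_iff.1 this
    rw [h5] at h2
    simp at h2
    linarith
  refine ⟨min 1 (η / (2 * M)), by positivity, min (m / 4) (η / (2 * (π + 1))), by positivity, m, hm0,
    hmle, ?_⟩
  intro t ht θ x ε hx hε
  have key : ∀ θ ∈ Icc (0:ℝ) (2 * π), min (m / 4) (η / (2 * (π + 1))) * (|x| + |ε|) ≤
      ‖h (θ + x, t) - h (θ, t) - ε * I * pd1 h (θ, t)‖ := by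
    intro θ hθ
    have hε1 : |ε| ≤ 1 := hε.trans (min_le_left _ _)
    have hε2 : |ε| ≤ η / (2 * M) := hε.trans (min_le_right _ _)
    by_cases hxδ : |x| ≤ δ
    · have h1 := hsmall θ hθ t ht x hxδ
      have h2 : ‖(x - ε * I) * pd1 h (θ, t)‖ ≤
          ‖h (θ + x, t) - h (θ, t) - ε * I * pd1 h (θ, t)‖ +
          ‖h (θ + x, t) - h (θ, t) - x * pd1 h (θ, t)‖ := by
        rw [show (x - ε * I) * pd1 h (θ, t) =
          (h (θ + x, t) - h (θ, t) - ε * I * pd1 h (θ, t)) -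
          (h (θ + x, t) - h (θ, t) - x * pd1 h (θ, t)) by ring]
        exact norm_sub_le _ _
      rw [norm_mul] at h2
      have h3 : |x| ≤ ‖(x - ε * I : ℂ)‖ := by
        simpa using Complex.abs_re_le_norm (x - ε * I : ℂ)
      have h4 : |ε| ≤ ‖(x - ε * I : ℂ)‖ := by
        simpa using Complex.abs_im_le_norm (x - ε * I : ℂ)
      have h5 := hmle θ t ht
      have h6 : m * ‖(x - ε * I : ℂ)‖ ≤ ‖(x - ε * I : ℂ)‖ * ‖pd1 h (θ, t)‖ := by
        rw [mul_comm]; gcongr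
      have h7 : min (m / 4) (η / (2 * (π + 1))) * (|x| + |ε|) ≤ m / 4 * (|x| + |ε|) := by
        gcongr; exact min_le_left _ _
      nlinarith
    · push Not at hxδ
      have h1 : η ≤ ‖h (θ + x, t) - h (θ, t)‖ :=
        hrmin (a := ((θ, t), x)) ⟨⟨hθ, ht⟩, abs_le.1 hx, hxδ.le⟩
      have h2 : ‖h (θ + x, t) - h (θ, t)‖ ≤ ‖h (θ + x, t) - h (θ, t) - ε * I * pd1 h (θ, t)‖ +
          ‖ε * I * pd1 h (θ, t)‖ := by
        rw [← sub_le_iff_le_add]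
        exact norm_sub_norm_le _ _
      have h3 : ‖ε * I * pd1 h (θ, t)‖ ≤ η / 2 := by
        rw [norm_mul, norm_mul, Complex.norm_I, mul_one, Complex.norm_real, Real.norm_eq_abs]
        calc |ε| * ‖pd1 h (θ, t)‖ ≤ η / (2 * M) * M := by
              gcongr
              exact hMle θ t ht
          _ = η / 2 := by field_simp
      have h7 : min (m / 4) (η / (2 * (π + 1))) * (|x| + |ε|) ≤ η / (2 * (π + 1)) * (π + 1) := by
        gcongr
        exact min_le_right _ _
      have h8 : η / (2 * (π + 1)) * (π + 1) = η / 2 := by field_simp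
      linarith
  obtain ⟨n, hn⟩ := exists_rep θ π
  have := key (θ + n * (2 * π)) ⟨by linarith [hn.1], by linarith [hn.2]⟩
  rwa [hpp, per_int hper, show θ + n * (2 * π) + x = (θ + x) + n * (2 * π) by ring, per_int hper] at this

lemma tube_ne {h : ℝ × ℝ → ℂ} (hper : ∀ θ t, h (θ + 2 * π, t) = h (θ, t)) {ε₀ c : ℝ} (hc : 0 < c)
    {t : ℝ}
    (htube : ∀ θ x ε : ℝ, |x| ≤ π → |ε| ≤ ε₀ →
        c * (|x| + |ε|) ≤ ‖h (θ + x, t) - h (θ, t) - ε * I * pd1 h (θ, t)‖)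
    (θ φ ε : ℝ) (hε : |ε| ≤ ε₀) (hε0 : ε ≠ 0) :
    h (φ, t) - (h (θ, t) + ε * I * pd1 h (θ, t)) ≠ 0 := by
  obtain ⟨n, hn⟩ := exists_rep φ θ
  have h1 := htube θ (φ + n * (2 * π) - θ) ε (by rw [abs_le]; constructor <;> linarith [hn.1, hn.2]) hε
  rw [add_sub_cancel, per_int hper, sub_sub] at h1
  intro h2
  rw [h2, norm_zero] at h1
  have : 0 < |ε| := abs_pos.2 hε0
  have h3 := abs_nonneg (φ + n * (2 * π) - θ)
  have := mul_pos hc (show 0 < |φ + n * (2 * π) - θ| + |ε| by linarith)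
  linarith

/-- logarithmic integral of the curve `h (·, t)` around `z` -/
noncomputable def wind (h : ℝ × ℝ → ℂ) (t : ℝ) (z : ℂ) : ℂ :=
  ∫ x in (0 : ℝ)..(2 * π), pd1 h (x, t) / (h (x, t) - z)

lemma jump (h : ℝ × ℝ → ℂ) (hs : ContDiff ℝ 1 h)
    (hper : ∀ θ t, h (θ + 2 * π, t) = h (θ, t)) {ε₀ c : ℝ} (hε₀ : 0 < ε₀) (hc : 0 < c) {t : ℝ}
    (hne : pd1 h (π, t) ≠ 0)
    (htube : ∀ θ x ε : ℝ, |x| ≤ π → |ε| ≤ ε₀ →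
        c * (|x| + |ε|) ≤ ‖h (θ + x, t) - h (θ, t) - ε * I * pd1 h (θ, t)‖) :
    ∃ ε : ℝ, 0 < ε ∧ ε ≤ ε₀ ∧ wind h t (h (π, t) + ε * I * pd1 h (π, t)) ≠
      wind h t (h (π, t) + (-ε : ℝ) * I * pd1 h (π, t)) := by
  by_contra hcon
  push Not at hcon
  have hpi := Real.pi_pos
  have hcc := hs.continuous
  have hc1 := pd1_cont hs
  set p := pd1 h (π, t) with hp
  set h0 := h (π, t) with hh0
  set K : ℝ → ℝ → ℂ := fun ε x => pd1 h (x, t) / (h (x, t) - (h0 + ε * I * p)) -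
    pd1 h (x, t) / (h (x, t) - (h0 + (-ε : ℝ) * I * p)) with hK
  have hnz : ∀ ε : ℝ, 0 < ε → ε ≤ ε₀ → ∀ x, h (x, t) - (h0 + ε * I * p) ≠ 0 := by
    intro ε h1 h2 x
    exact tube_ne hper hc htube π x ε (by rwa [abs_of_pos h1]) h1.ne'
  have hnz' : ∀ ε : ℝ, 0 < ε → ε ≤ ε₀ → ∀ x, h (x, t) - (h0 + (-ε : ℝ) * I * p) ≠ 0 := by
    intro ε h1 h2 x
    exact tube_ne hper hc htube π x (-ε) (by rwa [abs_neg, abs_of_pos h1]) (neg_ne_zero.2 h1.ne')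
  have hKc1 : ∀ ε : ℝ, 0 < ε → ε ≤ ε₀ →
      Continuous fun x => pd1 h (x, t) / (h (x, t) - (h0 + ε * I * p)) := by
    intro ε h1 h2
    exact Continuous.div (by fun_prop) (by fun_prop) (hnz ε h1 h2)
  have hKc2 : ∀ ε : ℝ, 0 < ε → ε ≤ ε₀ →
      Continuous fun x => pd1 h (x, t) / (h (x, t) - (h0 + (-ε : ℝ) * I * p)) := by
    intro ε h1 h2
    exact Continuous.div (by fun_prop) (by fun_prop) (hnz' ε h1 h2)
  have hKc : ∀ ε : ℝ, 0 < ε → ε ≤ ε₀ → Continuous (K ε) := by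
    intro ε h1 h2
    exact (hKc1 ε h1 h2).sub (hKc2 ε h1 h2)
  have hKint : ∀ ε : ℝ, 0 < ε → ε ≤ ε₀ → ∫ x in (0:ℝ)..(2 * π), K ε x = 0 := by
    intro ε h1 h2
    rw [hK]
    simp only
    rw [intervalIntegral.integral_sub ((hKc1 ε h1 h2).intervalIntegrable _ _)
      ((hKc2 ε h1 h2).intervalIntegrable _ _), sub_eq_zero]
    exact hcon ε h1 h2
  set F : ℝ → ℝ → ℂ := fun ε => (Ioc (-(π / ε)) (π / ε)).indicator
    (fun s => ε * K ε (π + ε * s)) with hF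
  have hFint : ∀ ε : ℝ, 0 < ε → ε ≤ ε₀ → ∫ s, F ε s = 0 := by
    intro ε h1 h2
    rw [hF]
    simp only
    rw [MeasureTheory.integral_indicator measurableSet_Ioc, ← intervalIntegral.integral_of_le
      (by have : 0 < π / ε := by positivity
          linarith), intervalIntegral.integral_const_mul,
      intervalIntegral.integral_comp_add_mul (K ε) h1.ne']
    have e1 : π + ε * -(π / ε) = 0 := by field_simp; ring
    have e2 : π + ε * (π / ε) = 2 * π := by field_simp; ring
    rw [e1, e2, hKint ε h1 h2]
    simp
  obtain ⟨M, hM⟩ := (isCompact_Icc (a := (0:ℝ)) (b := 2 * π)).exists_bound_of_continuousOn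
    (f := fun x => pd1 h (x, t)) (by fun_prop)
  have hM0 : 0 ≤ M := (norm_nonneg _).trans (hM 0 ⟨le_rfl, by positivity⟩)
  -- formula for F
  have hform : ∀ ε : ℝ, 0 < ε → ε ≤ ε₀ → ∀ x, K ε x = pd1 h (x, t) * (2 * ε * I * p) /
      ((h (x, t) - (h0 + ε * I * p)) * (h (x, t) - (h0 + (-ε : ℝ) * I * p))) := by
    intro ε h1 h2 x
    rw [hK]
    simp only
    rw [div_sub_div _ _ (hnz ε h1 h2 x) (hnz' ε h1 h2 x)]
    congr 1
    push_cast
    ring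
  have hpos : ∀ᶠ ε : ℝ in nhdsWithin 0 (Ioi 0), 0 < ε ∧ ε ≤ ε₀ := by
    filter_upwards [Ioc_mem_nhdsGT hε₀] with ε hε
    exact hε
  have hlim := MeasureTheory.tendsto_integral_filter_of_dominated_convergence
    (μ := MeasureTheory.volume) (l := nhdsWithin (0:ℝ) (Ioi 0)) (F := F)
    (f := fun s => 2 * I * (((1 + s ^ 2)⁻¹ : ℝ) : ℂ))
    (fun s => (2 * M * ‖p‖ / c ^ 2) * (1 + s ^ 2)⁻¹) ?_ ?_ ?_ ?_
  · rw [MeasureTheory.integral_const_mul, integral_complex_ofReal, integral_univ_inv_one_add_sq] at hlim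
    have h0lim : Filter.Tendsto (fun ε => ∫ s, F ε s) (nhdsWithin (0:ℝ) (Ioi 0)) (nhds 0) := by
      apply Filter.Tendsto.congr' _ tendsto_const_nhds
      filter_upwards [hpos] with ε hε
      exact (hFint ε hε.1 hε.2).symm
    have := tendsto_nhds_unique hlim h0lim
    simp [Real.pi_ne_zero] at this
  · filter_upwards [hpos] with ε hε
    apply Continuous.aestronglyMeasurable _ |>.indicator measurableSet_Ioc
    exact continuous_const.mul ((hKc ε hε.1 hε.2).comp (by fun_prop))
  · filter_upwards [hpos] with ε hε
    refine Filter.Eventually.of_forall fun s => ?_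
    rw [hF]
    simp only
    by_cases hsm : s ∈ Ioc (-(π / ε)) (π / ε)
    · rw [indicator_of_mem hsm, hform ε hε.1 hε.2]
      have hx : |ε * s| ≤ π := by
        rw [abs_mul, abs_of_pos hε.1]
        have : |s| ≤ π / ε := abs_le.2 ⟨hsm.1.le, hsm.2⟩
        calc ε * |s| ≤ ε * (π / ε) := by have := hε.1; gcongr
          _ = π := by have := hε.1; field_simp
      have b1 := htube π (ε * s) ε hx (by rw [abs_of_pos hε.1]; exact hε.2)
      have b2 := htube π (ε * s) (-ε) hx (by rw [abs_neg, abs_of_pos hε.1]; exact hε.2)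
      rw [sub_sub] at b1 b2
      rw [abs_neg] at b2
      have hb : c * (|ε * s| + |ε|) = ε * (c * (1 + |s|)) := by
        rw [abs_mul, abs_of_pos hε.1]; ring
      rw [hb] at b1 b2
      have b3 := hM (π + ε * s) ⟨by linarith [(abs_le.1 hx).1], by linarith [(abs_le.1 hx).2]⟩
      have hε1 := hε.1
      rw [norm_mul, norm_div, norm_mul, norm_mul (h (π + ε * s, t) - _)]
      have hn : ‖(2 * ε * I * p : ℂ)‖ = 2 * ε * ‖p‖ := by
        simp [abs_of_pos hε.1]
      rw [hn, Complex.norm_real, Real.norm_eq_abs, abs_of_pos hε.1]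
      have hs1 : 0 < 1 + |s| := by positivity
      calc ε * (‖pd1 h (π + ε * s, t)‖ * (2 * ε * ‖p‖) /
            (‖h (π + ε * s, t) - (h0 + ε * I * p)‖ * ‖h (π + ε * s, t) - (h0 + (-ε : ℝ) * I * p)‖))
          ≤ ε * (M * (2 * ε * ‖p‖) / ((ε * (c * (1 + |s|))) * (ε * (c * (1 + |s|))))) := by
            gcongr
        _ = (2 * M * ‖p‖ / c ^ 2) * ((1 + |s|) ^ 2)⁻¹ := by
            field_simp
        _ ≤ _ := by
            gcongr
            nlinarith [sq_abs s, abs_nonneg s]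
    · rw [indicator_of_notMem hsm, norm_zero]
      positivity
  · exact integrable_inv_one_add_sq.const_mul _
  · refine Filter.Eventually.of_forall fun s => ?_
    have hD : Filter.Tendsto (fun ε : ℝ => (h (π + ε * s, t) - h0) / (ε : ℂ)) (nhdsWithin 0 (Ioi 0))
        (nhds (s * p)) := by
      have hd : HasDerivAt (fun ε : ℝ => h (π + ε * s, t)) (s • p) 0 := by
        have e1 : HasDerivAt (fun ε : ℝ => π + ε * s) s 0 := by
          simpa using ((hasDerivAt_id (0:ℝ)).mul_const s).const_add π
        have e2 := pd1_hasDerivAt hs (π + 0 * s) t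
        have := HasDerivAt.scomp (0:ℝ) e2 e1
        simpa [Function.comp_def] using this
      have := (hasDerivWithinAt_iff_tendsto_slope' (s := Ioi 0) (by simp)).1 hd.hasDerivWithinAt
      simp only [Complex.real_smul] at this
      refine this.congr' ?_
      filter_upwards with ε
      rw [slope_def_module]
      simp [div_eq_inv_mul, hh0]
    have hp1 : Filter.Tendsto (fun ε : ℝ => pd1 h (π + ε * s, t)) (nhdsWithin 0 (Ioi 0))
        (nhds p) := by
      have : Continuous (fun ε : ℝ => pd1 h (π + ε * s, t)) := by fun_prop
      have := this.tendsto 0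
      simp only [zero_mul, add_zero] at this
      exact this.mono_left nhdsWithin_le_nhds
    have hsI : (s - I : ℂ) ≠ 0 := by
      intro hh
      have := congrArg Complex.im hh
      simp at this
    have hsI' : (s + I : ℂ) ≠ 0 := by
      intro hh
      have := congrArg Complex.im hh
      simp at this
    have hlim : Filter.Tendsto (fun ε : ℝ => pd1 h (π + ε * s, t) * (2 * I * p) /
        (((h (π + ε * s, t) - h0) / (ε : ℂ) - I * p) * ((h (π + ε * s, t) - h0) / (ε : ℂ) + I * p)))
        (nhdsWithin 0 (Ioi 0))
        (nhds (p * (2 * I * p) / ((s * p - I * p) * (s * p + I * p)))) := by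
      refine (hp1.mul_const _).div ((hD.sub_const _).mul (hD.add_const _)) ?_
      rw [← sub_mul, ← add_mul]
      exact mul_ne_zero (mul_ne_zero hsI hne) (mul_ne_zero hsI' hne)
    have hval : p * (2 * I * p) / ((s * p - I * p) * (s * p + I * p)) =
        2 * I * (((1 + s ^ 2)⁻¹ : ℝ) : ℂ) := by
      rw [← sub_mul, ← add_mul]
      have e3 : ((1 + s ^ 2 : ℝ) : ℂ) = (s - I) * (s + I) := by
        push_cast
        ring_nf
        rw [Complex.I_sq]; ring
      rw [ofReal_inv, e3]
      field_simp
    rw [hval] at hlim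
    refine hlim.congr' ?_
    have hin : ∀ᶠ ε : ℝ in nhdsWithin 0 (Ioi 0), ε * (|s| + 1) < π := by
      have : Continuous (fun ε : ℝ => ε * (|s| + 1)) := by fun_prop
      have := (this.tendsto 0).mono_left (nhdsWithin_le_nhds (s := Ioi 0))
      exact this.eventually (gt_mem_nhds (by simpa using hpi))
    filter_upwards [hpos, hin] with ε hε hin
    have hε1 := hε.1
    have hsm : s ∈ Ioc (-(π / ε)) (π / ε) := by
      have h1 : |s| < π / ε := by
        rw [lt_div_iff₀ hε1]; nlinarith
      exact ⟨(abs_lt.1 h1).1, (abs_lt.1 h1).2.le⟩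
    rw [hF]
    simp only
    rw [indicator_of_mem hsm, hform ε hε.1 hε.2]
    have hεc : (ε : ℂ) ≠ 0 := by exact_mod_cast hε1.ne'
    have g1 : h (π + ε * s, t) - (h0 + ε * I * p) =
        ε * ((h (π + ε * s, t) - h0) / (ε : ℂ) - I * p) := by
      field_simp; ring
    have g2 : h (π + ε * s, t) - (h0 + (-ε : ℝ) * I * p) =
        ε * ((h (π + ε * s, t) - h0) / (ε : ℂ) + I * p) := by
      push_cast; field_simp; ring
    rw [g1, g2]
    generalize (h (π + ε * s, t) - h0) / (ε : ℂ) - I * p = a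
    generalize (h (π + ε * s, t) - h0) / (ε : ℂ) + I * p = b
    rw [show (ε : ℂ) * a * (ε * b) = ε ^ 2 * (a * b) by ring, ← mul_div_assoc,
      show (ε : ℂ) * (pd1 h (π + ε * s, t) * (2 * ε * I * p)) =
        ε ^ 2 * (pd1 h (π + ε * s, t) * (2 * I * p)) by ring,
      mul_div_mul_left _ _ (pow_ne_zero 2 hεc)]

lemma sides (h : ℝ × ℝ → ℂ) (hs : ContDiff ℝ 1 h)
    (hper : ∀ θ t, h (θ + 2 * π, t) = h (θ, t)) {ε₀ c : ℝ} (hc : 0 < c)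
    (htube : ∀ t ∈ Icc (0:ℝ) 1, ∀ θ x ε : ℝ, |x| ≤ π → |ε| ≤ ε₀ →
        c * (|x| + |ε|) ≤ ‖h (θ + x, t) - h (θ, t) - ε * I * pd1 h (θ, t)‖)
    (σ : ℝ) (hσ : |σ| = 1) {θ θ' t t' ε ε' : ℝ} (ht : t ∈ Icc (0:ℝ) 1) (ht' : t' ∈ Icc (0:ℝ) 1)
    (hε : ε ∈ Ioc 0 ε₀) (hε' : ε' ∈ Ioc 0 ε₀) :
    wind h t (h (θ, t) + (σ * ε : ℝ) * I * pd1 h (θ, t)) =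
      wind h t' (h (θ', t') + (σ * ε' : ℝ) * I * pd1 h (θ', t')) := by
  have hcc := hs.continuous
  have hc1 := pd1_cont hs
  have i1 : PreconnectedSpace (Icc (0:ℝ) 1) := Subtype.preconnectedSpace isPreconnected_Icc
  have i2 : PreconnectedSpace (Ioc (0:ℝ) ε₀) := Subtype.preconnectedSpace isPreconnected_Ioc
  have := winding_const (P := ℝ × Icc (0:ℝ) 1 × Ioc (0:ℝ) ε₀)
    (fun p x => h (x, p.2.1) - (h (p.1, p.2.1) + (σ * p.2.2 : ℝ) * I * pd1 h (p.1, p.2.1)))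
    (fun p x => pd1 h (x, p.2.1))
    (by unfold Function.uncurry; fun_prop) (by unfold Function.uncurry; fun_prop)
    (fun p x => (pd1_hasDerivAt hs x p.2.1).sub_const _)
    (fun p => by
      have := hper 0 p.2.1
      rw [zero_add] at this
      simp only [this])
    (fun p x => by
      have hp := p.2.2.2
      have hσ0 : σ ≠ 0 := by
        rintro rfl
        simp at hσ
      refine tube_ne hper hc (htube _ p.2.1.2) p.1 x _ ?_ (mul_ne_zero hσ0 hp.1.ne')
      rw [abs_mul, hσ, one_mul, abs_of_pos hp.1]
      exact hp.2)
    (θ, ⟨t, ht⟩, ⟨ε, hε⟩) (θ', ⟨t', ht'⟩, ⟨ε', hε'⟩)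
  exact this

lemma cross (h : ℝ × ℝ → ℂ) (hs : ContDiff ℝ 1 h)
    (hper : ∀ θ t, h (θ + 2 * π, t) = h (θ, t)) {ε₀ m : ℝ} (hε₀ : 0 < ε₀) (hm : 0 < m)
    (hmle : ∀ θ : ℝ, ∀ t ∈ Icc (0:ℝ) 1, m ≤ ‖pd1 h (θ, t)‖)
    (hin : ∀ θ : ℝ, ∀ t ∈ Icc (0:ℝ) 1, (pd2 h (θ, t) / pd1 h (θ, t)).im ≤ 0)
    (σ : ℝ) {z : ℂ} {θ₀ c₀ r : ℝ} (hr : 0 < r) (hz : h (θ₀, c₀) = z)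
    (hmem : ∀ s ∈ Ioo 0 r, c₀ + σ * s ∈ Icc (0:ℝ) 1)
    (hav : ∀ s ∈ Ioo 0 r, ∀ θ, h (θ, c₀ + σ * s) ≠ z)
    (H : ∀ s ∈ Ioo 0 r, ∀ θ ε : ℝ, ε ≠ 0 → |ε| ≤ ε₀ →
      z = h (θ, c₀ + σ * s) + ε * I * pd1 h (θ, c₀ + σ * s) → σ * ε < 0) : False := by
  have hcc := hs.continuous
  set k : ℝ × ℝ → ℂ := fun p => h (p.1, c₀ + σ * p.2) with hk
  have hks : ContDiff ℝ 1 k := hs.comp (by fun_prop)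
  have hk2 : ∀ θ s, pd2 k (θ, s) = σ * pd2 h (θ, c₀ + σ * s) := by
    intro θ s
    have e1 : HasDerivAt (fun s : ℝ => c₀ + σ * s) σ s := by
      simpa using ((hasDerivAt_id s).const_mul σ).const_add c₀
    have e2 := HasDerivAt.scomp s (pd2_hasDerivAt hs θ (c₀ + σ * s)) e1
    have e3 := (pd2_hasDerivAt hks θ s).unique e2
    rw [e3, Complex.real_smul]
  have hev : ∀ᶠ s in nhds (0:ℝ), ‖h (θ₀, c₀ + σ * s) - z‖ < ε₀ * m := by
    have : Continuous (fun s : ℝ => ‖h (θ₀, c₀ + σ * s) - z‖) := by fun_prop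
    refine (this.tendsto 0).eventually (gt_mem_nhds ?_)
    simp [hz]
    positivity
  obtain ⟨δ', hδ', hball⟩ := Metric.eventually_nhds_iff.1 hev
  set δ := min (δ' / 2) (r / 2) with hδ
  have hδ0 : 0 < δ := by positivity
  have hδ1 : δ < δ' := (min_le_left _ _).trans_lt (by linarith)
  have hδ2 : δ < r := (min_le_right _ _).trans_lt (by linarith)
  suffices hyp : ∀ t ∈ Ico (0:ℝ) δ, ∀ θ, (∀ θ', ‖k (θ, t) - z‖ ≤ ‖k (θ', t) - z‖) →
      inner ℝ (k (θ, t) - z) (pd2 k (θ, t)) ≤ 0 by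
    obtain ⟨θ, hθ⟩ := dist_mono k hks (fun θ t => hper θ _) z δ hyp ⟨θ₀, by simpa [hk] using hz⟩ δ
      ⟨hδ0.le, le_rfl⟩
    exact hav δ ⟨hδ0, hδ2⟩ θ hθ
  intro s hsm θ hmin
  rcases hsm.1.eq_or_lt with h0 | h0
  · subst h0
    have := hmin θ₀
    simp only [hk, mul_zero, add_zero, hz, sub_self, norm_zero] at this
    have h1 := norm_le_zero_iff.1 this
    simp only [hk, mul_zero, add_zero, h1, inner_zero_left, le_refl]
  have hsr : s ∈ Ioo 0 r := ⟨h0, hsm.2.trans hδ2⟩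
  have hT := hmem s hsr
  set t := c₀ + σ * s with ht
  have hp0 : pd1 h (θ, t) ≠ 0 := norm_pos_iff.1 (hm.trans_le (hmle θ t hT))
  set p := pd1 h (θ, t) with hp
  have horth : inner ℝ (h (θ, t) - z) p = 0 := by
    have hd := ((pd1_hasDerivAt hs θ t).sub_const z).norm_sq
    have hl : IsLocalMin (fun x => ‖h (x, t) - z‖ ^ 2) θ := by
      refine Filter.Eventually.of_forall fun x => ?_
      have := hmin x
      simp only [hk] at this
      exact pow_le_pow_left₀ (norm_nonneg _) this 2
    have := hl.hasDerivAt_eq_zero hd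
    linarith
  -- representation
  set w : ℂ := (z - h (θ, t)) / p with hw
  have hzw : z = h (θ, t) + w * p := by
    rw [hw]; field_simp; ring
  have hwre : w.re = 0 := by
    have h1 : h (θ, t) - z = -(w * p) := by rw [hzw]; ring
    rw [h1, Complex.inner] at horth
    have h2 : (p * (starRingEnd ℂ) (-(w * p))).re = - w.re * Complex.normSq p := by
      simp [Complex.normSq_apply]; ring
    rw [h2] at horth
    have := Complex.normSq_pos.2 hp0
    rcases mul_eq_zero.1 horth with h3 | h3
    · linarith
    · linarith
  have hwI : w = w.im * I := by
    apply Complex.ext <;> simp [hwre]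
  have hrep : z = h (θ, t) + (w.im : ℝ) * I * p := by
    rw [← hwI]; exact hzw
  have hwn : |w.im| ≤ ε₀ := by
    have h1 := hmin θ₀
    simp only [hk] at h1
    have h2 := @hball s (by rw [Real.dist_eq, sub_zero, abs_of_pos h0]; linarith [hsm.2])
    have h3 : ‖h (θ, t) - z‖ = |w.im| * ‖p‖ := by
      rw [hrep, sub_add_cancel_left, norm_neg, norm_mul, norm_mul]
      simp
    have h4 := hmle θ t hT
    have h5 : |w.im| * m ≤ ε₀ * m := by
      calc |w.im| * m ≤ |w.im| * ‖p‖ := by gcongr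
        _ = ‖h (θ, t) - z‖ := h3.symm
        _ ≤ _ := h1.trans h2.le
    exact le_of_mul_le_mul_right h5 hm
  have hw0 : w.im ≠ 0 := by
    intro h1
    rw [h1] at hrep
    simp at hrep
    exact hav s hsr θ hrep.symm
  have hsign := H s hsr θ w.im hw0 hwn hrep
  show inner ℝ (h (θ, t) - z) (pd2 k (θ, s)) ≤ 0
  rw [hk2]
  have hq := hin θ t hT
  set q := pd2 h (θ, t) / p with hqd
  have hqp : pd2 h (θ, c₀ + σ * s) = q * p := by
    rw [hqd]; field_simp; rfl
  have h1 : h (θ, t) - z = -(w * p) := by rw [hzw]; ring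
  rw [h1, hqp, Complex.inner]
  have h2 : (σ * (q * p) * (starRingEnd ℂ) (-(w * p))).re =
      - (σ * w.im) * q.im * Complex.normSq p := by
    simp [Complex.normSq_apply, hwre]; ring
  rw [h2]
  have h3 := Complex.normSq_nonneg p
  have h4 : - (σ * w.im) * q.im ≤ 0 := by nlinarith
  exact mul_nonpos_of_nonpos_of_nonneg h4 h3

lemma all_times (h : ℝ × ℝ → ℂ) (hs : ContDiff ℝ 1 h)
    (hper : ∀ θ t, h (θ + 2 * π, t) = h (θ, t)) {ε₀ c m : ℝ} (hε₀ : 0 < ε₀) (hc : 0 < c)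
    (hm : 0 < m)
    (hmle : ∀ θ : ℝ, ∀ t ∈ Icc (0:ℝ) 1, m ≤ ‖pd1 h (θ, t)‖)
    (htube : ∀ t ∈ Icc (0:ℝ) 1, ∀ θ x ε : ℝ, |x| ≤ π → |ε| ≤ ε₀ →
        c * (|x| + |ε|) ≤ ‖h (θ + x, t) - h (θ, t) - ε * I * pd1 h (θ, t)‖)
    (hin : ∀ θ : ℝ, ∀ t ∈ Icc (0:ℝ) 1, (pd2 h (θ, t) / pd1 h (θ, t)).im ≤ 0)
    {z : ℂ} {θ₁ θ₂ t₁ t₂ : ℝ} (ht₁ : t₁ ∈ Icc (0:ℝ) 1) (ht₂ : t₂ ∈ Icc (0:ℝ) 1)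
    (hz₁ : h (θ₁, t₁) = z) (hz₂ : h (θ₂, t₂) = z) :
    ∀ s ∈ Icc t₁ t₂, ∃ θ, h (θ, s) = z := by
  intro s hsm
  by_contra hcon
  have hcc := hs.continuous
  have hc1 := pd1_cont hs
  -- the set of times
  set T : Set ℝ := Prod.snd '' ((Icc 0 (2 * π) ×ˢ Icc t₁ t₂) ∩ h ⁻¹' {z}) with hT
  have hTc : IsCompact T := ((isCompact_Icc.prod isCompact_Icc).inter_right
    (isClosed_singleton.preimage hcc)).image continuous_snd
  have hTmem : ∀ t ∈ Icc t₁ t₂, ∀ θ, h (θ, t) = z → t ∈ T := by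
    intro t ht θ hθ
    obtain ⟨n, hn⟩ := exists_rep θ π
    exact ⟨(θ + n * (2 * π), t), ⟨⟨⟨by linarith [hn.1], by linarith [hn.2]⟩, ht⟩,
      by simp [per_int hper, hθ]⟩, rfl⟩
  have hTz : ∀ t ∈ T, t ∈ Icc t₁ t₂ ∧ ∃ θ, h (θ, t) = z := by
    rintro t ⟨⟨θ, t'⟩, ⟨⟨-, h2⟩, h3⟩, rfl⟩
    exact ⟨h2, θ, h3⟩
  have h12 : t₁ ≤ t₂ := hsm.1.trans hsm.2
  obtain ⟨a, haT, hamax⟩ := (hTc.inter_right (isClosed_Iic (a := s))).exists_isMaxOn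
    ⟨t₁, hTmem t₁ ⟨le_rfl, h12⟩ θ₁ hz₁, hsm.1⟩ continuousOn_id
  obtain ⟨b, hbT, hbmin⟩ := (hTc.inter_right (isClosed_Ici (a := s))).exists_isMinOn
    ⟨t₂, hTmem t₂ ⟨h12, le_rfl⟩ θ₂ hz₂, hsm.2⟩ continuousOn_id
  obtain ⟨ha12, θa, hza⟩ := hTz a haT.1
  obtain ⟨hb12, θb, hzb⟩ := hTz b hbT.1
  have has : a < s := by
    refine lt_of_le_of_ne haT.2 ?_
    rintro rfl
    exact hcon ⟨θa, hza⟩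
  have hsb : s < b := by
    refine lt_of_le_of_ne hbT.2 ?_
    rintro rfl
    exact hcon ⟨θb, hzb⟩
  have hab : ∀ t ∈ Ioo a b, ∀ θ, h (θ, t) ≠ z := by
    intro t ht θ hθ
    have htT := hTmem t ⟨ha12.1.trans ht.1.le, ht.2.le.trans hb12.2⟩ θ hθ
    rcases le_total t s with h1 | h1
    · have : t ≤ a := hamax ⟨htT, h1⟩
      linarith [ht.1]
    · have : b ≤ t := hbmin ⟨htT, h1⟩
      linarith [ht.2]
  have hab01 : ∀ t ∈ Ioo a b, t ∈ Icc (0:ℝ) 1 := by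
    intro t ht
    exact ⟨by linarith [ht.1, ha12.1, ht₁.1], by linarith [ht.2, hb12.2, ht₂.2]⟩
  have hwc : ∀ t ∈ Ioo a b, wind h t z = wind h s z := by
    intro t ht
    have i1 : PreconnectedSpace (Ioo a b) := Subtype.preconnectedSpace isPreconnected_Ioo
    exact winding_const (P := Ioo a b)
      (fun p x => h (x, p) - z)
      (fun p x => pd1 h (x, p))
      (by unfold Function.uncurry; fun_prop) (by unfold Function.uncurry; fun_prop)
      (fun p x => (pd1_hasDerivAt hs x p).sub_const _)
      (fun p => by
        have := hper 0 p
        rw [zero_add] at this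
        simp only [this])
      (fun p x => sub_ne_zero.2 (hab p p.2 x)) ⟨t, ht⟩ ⟨s, has, hsb⟩
  have h01 : (0:ℝ) ∈ Icc (0:ℝ) 1 := by simp
  obtain ⟨e, he0, he1, hjump⟩ := jump h hs hper hε₀ hc
    (norm_pos_iff.1 (hm.trans_le (hmle π 0 h01))) (htube 0 h01)
  -- winding numbers determine the sign of ε
  have hsg : ∀ σ : ℝ, |σ| = 1 → ∀ t ∈ Ioo a b, ∀ θ ε : ℝ, |ε| ≤ ε₀ → 0 < σ * ε →
      z = h (θ, t) + ε * I * pd1 h (θ, t) →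
      wind h s z = wind h 0 (h (π, 0) + (σ * e : ℝ) * I * pd1 h (π, 0)) := by
    intro σ hσ t ht θ ε hε hpos hz
    have h1 : σ * ε = |ε| := by
      rw [← abs_of_pos hpos, abs_mul, hσ, one_mul]
    have hσ2 : σ * σ = 1 := by rw [← abs_mul_abs_self, hσ, one_mul]
    have h2 : ε = σ * |ε| := by rw [← h1, ← mul_assoc, hσ2, one_mul]
    have h3 : |ε| ∈ Ioc 0 ε₀ := ⟨by rw [← h1]; exact hpos, hε⟩
    have := sides h hs hper hc htube σ hσ (θ := θ) (θ' := π) (hab01 t ht) h01 h3 ⟨he0, he1⟩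
    rw [← h2, ← hz] at this
    rw [← this, hwc t ht]
  by_cases hcase : wind h s z = wind h 0 (h (π, 0) + e * I * pd1 h (π, 0))
  · -- not on the right: contradiction at b
    refine cross h hs hper hε₀ hm hmle hin (-1) (c₀ := b) (r := b - s) (by linarith) hzb ?_ ?_ ?_
    · intro x hx
      exact hab01 _ ⟨by linarith [hx.2], by linarith [hx.1]⟩
    · intro x hx
      exact hab _ ⟨by linarith [hx.2], by linarith [hx.1]⟩
    · intro x hx θ ε hε hε1 hz
      by_contra hneg
      have hpos : 0 < -1 * ε := lt_of_le_of_ne (not_lt.1 hneg) (by simpa using hε)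
      have := hsg (-1) (by simp) _ ⟨by linarith [hx.2], by linarith [hx.1]⟩ θ ε hε1 hpos hz
      rw [hcase, neg_one_mul] at this
      exact hjump this
  · refine cross h hs hper hε₀ hm hmle hin 1 (c₀ := a) (r := s - a) (by linarith) hza ?_ ?_ ?_
    · intro x hx
      exact hab01 _ ⟨by linarith [hx.1], by linarith [hx.2]⟩
    · intro x hx
      exact hab _ ⟨by linarith [hx.1], by linarith [hx.2]⟩
    · intro x hx θ ε hε hε1 hz
      by_contra hneg
      have hpos : 0 < 1 * ε := lt_of_le_of_ne (not_lt.1 hneg) (by simpa using hε.symm)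
      have := hsg 1 (by simp) _ ⟨by linarith [hx.1], by linarith [hx.2]⟩ θ ε hε1 hpos hz
      rw [one_mul] at this
      exact hcase this

lemma const_along (h f : ℝ × ℝ → ℂ) (hs : ContDiff ℝ 1 h) (hfs : ContDiff ℝ 1 f)
    (hper : ∀ θ t, h (θ + 2 * π, t) = h (θ, t)) (hfper : ∀ θ t, f (θ + 2 * π, t) = f (θ, t))
    {c : ℝ} (hc : 0 < c)
    (hne : ∀ θ : ℝ, ∀ t ∈ Icc (0:ℝ) 1, pd1 h (θ, t) ≠ 0)
    (htube : ∀ t ∈ Icc (0:ℝ) 1, ∀ θ x : ℝ, |x| ≤ π → c * |x| ≤ ‖h (θ + x, t) - h (θ, t)‖)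
    (hfe : ∀ θ : ℝ, ∀ t ∈ Icc (0:ℝ) 1,
      pd2 f (θ, t) = pd2 h (θ, t) / pd1 h (θ, t) * pd1 f (θ, t))
    {z : ℂ} {t₁ t₂ : ℝ} (ht₁ : t₁ ∈ Icc (0:ℝ) 1) (ht₂ : t₂ ∈ Icc (0:ℝ) 1) (h12 : t₁ ≤ t₂)
    (Θ : ℝ → ℝ) (hΘ : ∀ t ∈ Icc t₁ t₂, h (Θ t, t) = z) : f (Θ t₂, t₂) = f (Θ t₁, t₁) := by
  have hder : ∀ t ∈ Icc t₁ t₂, HasDerivWithinAt (fun t => f (Θ t, t)) 0 (Icc t₁ t₂) t := by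
    intro t ht
    have ht01 : t ∈ Icc (0:ℝ) 1 := ⟨ht₁.1.trans ht.1, ht.2.trans ht₂.2⟩
    have hrep : ∀ t', ∃ n : ℤ, Θ t' + n * (2 * π) ∈ Ico (Θ t - π) (Θ t + π) := fun t' => exists_rep _ _
    choose n hn using hrep
    set Ψ : ℝ → ℝ := fun t' => Θ t' + n t' * (2 * π) with hΨ
    set p := pd1 h (Θ t, t) with hp
    have hp0 : p ≠ 0 := hne _ t ht01
    set y0 : ℝ × ℝ := (Θ t, t) with hy0
    set y : ℝ → ℝ × ℝ := fun t' => (Ψ t', t') with hy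
    set l := nhdsWithin t (Icc t₁ t₂) with hl
    have hid : (fun t' => t' - t) =O[l] fun t' => t' - t := Asymptotics.isBigO_refl _ _
    have hO1 : (fun t' => h (Θ t, t') - h (Θ t, t)) =O[l] fun t' => t' - t :=
      (pd2_hasDerivAt hs (Θ t) t).isBigO_sub.mono nhdsWithin_le_nhds
    have hmem : ∀ᶠ t' in l, t' ∈ Icc t₁ t₂ := self_mem_nhdsWithin
    have hO2 : (fun t' => Ψ t' - Θ t) =O[l] fun t' => t' - t := by
      refine Asymptotics.IsBigO.trans (Asymptotics.IsBigO.of_bound (1 / c) ?_) hO1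
      filter_upwards [hmem] with t' ht'
      have ht'01 : t' ∈ Icc (0:ℝ) 1 := ⟨ht₁.1.trans ht'.1, ht'.2.trans ht₂.2⟩
      have h1 := htube t' ht'01 (Θ t) (Ψ t' - Θ t)
        (abs_le.2 ⟨by linarith [(hn t').1], by linarith [(hn t').2]⟩)
      rw [add_sub_cancel, hΨ] at h1
      simp only at h1
      rw [per_int hper, hΘ t' ht', norm_sub_rev] at h1
      rw [hΘ t ht, Real.norm_eq_abs, one_div, inv_mul_eq_div, le_div_iff₀ hc, mul_comm]
      exact h1
    have hO3 : (fun t' => y t' - y0) =O[l] fun t' => t' - t := by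
      exact Asymptotics.IsBigO.prod_left hO2 hid
    have hytend : Filter.Tendsto y l (nhds y0) := by
      rw [tendsto_iff_norm_sub_tendsto_zero]
      have h0 : Filter.Tendsto (fun t' => t' - t) l (nhds 0) := by
        have : Continuous (fun t' : ℝ => t' - t) := by fun_prop
        have := this.tendsto t
        rw [sub_self] at this
        exact this.mono_left nhdsWithin_le_nhds
      exact tendsto_zero_iff_norm_tendsto_zero.1 (hO3.trans_tendsto h0)
    have hlo : ∀ g : ℝ × ℝ → ℂ, ContDiff ℝ 1 g →
        (fun t' => g (y t') - g y0 - ((Ψ t' - Θ t : ℝ) * pd1 g y0 + (t' - t : ℝ) * pd2 g y0))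
          =o[l] fun t' => t' - t := by
      intro g hg
      have h1 := (hg.differentiable one_ne_zero y0).hasFDerivAt.isLittleO
      have h2 := (h1.comp_tendsto hytend).trans_isBigO hO3
      refine h2.congr_left fun t' => ?_
      simp only [Function.comp]
      rw [pd_fderiv]
      rfl
    have hh := hlo h hs
    have hf := hlo f hfs
    have hcomb := hf.sub (hh.const_mul_left (pd1 f y0 / p))
    rw [hasDerivWithinAt_iff_isLittleO]
    refine hcomb.congr' ?_ Filter.EventuallyEq.rfl
    filter_upwards [hmem] with t' ht'
    have e1 : h (y t') = h y0 := by
      simp only [hy, hΨ, hy0]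
      rw [per_int hper, hΘ t' ht', hΘ t ht]
    have e2 : f (y t') = f (Θ t', t') := by
      simp only [hy, hΨ]
      rw [per_int hfper]
    rw [e1, e2, hfe (Θ t) t ht01]
    simp only [smul_zero, sub_zero, sub_self, zero_sub]
    rw [← hp]
    field_simp
    ring
  have hconst := constant_of_has_deriv_right_zero (f := fun t => f (Θ t, t)) (a := t₁) (b := t₂)
    (fun t ht => (hder t ht).continuousWithinAt) (fun t ht => by
      refine (hder t ⟨ht.1, ht.2.le⟩).mono_of_mem_nhdsWithin ?_
      exact Filter.mem_of_superset (Icc_mem_nhdsGE ht.2) (Icc_subset_Icc_left ht.1))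
  exact hconst t₂ ⟨h12, le_rfl⟩

theorem XHolomorphic_functions_factor_through_framing
    (h : ℝ × ℝ → ℂ)
    (hsm : ContDiff ℝ (⊤ : ℕ∞) h)
    (hper : ∀ θ t, h (θ + 2 * π, t) = h (θ, t))
    (hinj : ∀ t ∈ Icc (0:ℝ) 1, InjOn (fun θ => h (θ, t)) (Ico 0 (2 * π)))
    (hderiv : ∀ θ : ℝ, ∀ t ∈ Icc (0:ℝ) 1, deriv (fun x => h (x, t)) θ ≠ 0)
    (hinward : ∀ θ : ℝ, ∀ t ∈ Icc (0:ℝ) 1,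
      (deriv (fun s => h (θ, s)) t / deriv (fun x => h (x, t)) θ).im ≤ 0)
    (A : Set ℂ) (hA : A = h '' (univ ×ˢ Icc (0:ℝ) 1))
    (hfront : frontier A ⊆ (range fun θ => h (θ, 0)) ∪ (range fun θ => h (θ, 1)))
    (X : ℝ × ℝ → ℂ)
    (hX : ∀ θ t, X (θ, t) = -(deriv (fun s => h (θ, s)) t) / deriv (fun x => h (x, t)) θ)
    (f : ℝ × ℝ → ℂ)
    (hf_per : ∀ θ t, f (θ + 2 * π, t) = f (θ, t))
    (hf_sm : ContDiff ℝ (⊤ : ℕ∞) f)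
    (hf_holo : ∀ θ : ℝ, ∀ t ∈ Icc (0:ℝ) 1,
      deriv (fun s => f (θ, s)) t = -X (θ, t) * deriv (fun x => f (x, t)) θ) :
    ∃ g : ℂ → ℂ, ContinuousOn g A ∧
      (∀ θ : ℝ, ∀ t ∈ Icc (0:ℝ) 1, f (θ, t) = g (h (θ, t))) ∧
      ContDiff ℝ (⊤ : ℕ∞) (fun θ => g (h (θ, 0))) ∧ ContDiff ℝ (⊤ : ℕ∞) (fun θ => g (h (θ, 1))) ∧
      ∀ g' : ℂ → ℂ, ContinuousOn g' A →
        (∀ θ : ℝ, ∀ t ∈ Icc (0:ℝ) 1, f (θ, t) = g' (h (θ, t))) →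
        EqOn g' g A := by
  have hs : ContDiff ℝ 1 h := hsm.of_le (by exact_mod_cast le_top)
  have hfs : ContDiff ℝ 1 f := hf_sm.of_le (by exact_mod_cast le_top)
  have d1 : ∀ θ t, deriv (fun x => h (x, t)) θ = pd1 h (θ, t) := fun θ t => (pd1_hasDerivAt hs θ t).deriv
  have d2 : ∀ θ t, deriv (fun x => h (θ, x)) t = pd2 h (θ, t) := fun θ t => (pd2_hasDerivAt hs θ t).deriv
  have d3 : ∀ θ t, deriv (fun x => f (x, t)) θ = pd1 f (θ, t) := fun θ t => (pd1_hasDerivAt hfs θ t).deriv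
  have d4 : ∀ θ t, deriv (fun x => f (θ, x)) t = pd2 f (θ, t) := fun θ t => (pd2_hasDerivAt hfs θ t).deriv
  simp only [hX, d1, d2, d3, d4] at hderiv hinward hf_holo
  have hcc := hs.continuous
  have hfc := hfs.continuous
  obtain ⟨ε₀, hε₀, c, hc, m, hm, hmle, htube⟩ := tube h hs hper hinj hderiv
  have hfe : ∀ θ : ℝ, ∀ t ∈ Icc (0:ℝ) 1,
      pd2 f (θ, t) = pd2 h (θ, t) / pd1 h (θ, t) * pd1 f (θ, t) := by
    intro θ t ht
    rw [hf_holo θ t ht, neg_div, neg_neg]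
  have htube0 : ∀ t ∈ Icc (0:ℝ) 1, ∀ θ x : ℝ, |x| ≤ π → c * |x| ≤ ‖h (θ + x, t) - h (θ, t)‖ := by
    intro t ht θ x hx
    simpa using htube t ht θ x 0 hx (by simpa using hε₀.le)
  have hsame : ∀ t ∈ Icc (0:ℝ) 1, ∀ θ θ', h (θ, t) = h (θ', t) → f (θ, t) = f (θ', t) := by
    intro t ht θ θ' he
    obtain ⟨n, rfl⟩ := inj_mod hper (hinj t ht) he
    rw [per_int hf_per]
  have hkey : ∀ θ₁ t₁ θ₂ t₂, t₁ ∈ Icc (0:ℝ) 1 → t₂ ∈ Icc (0:ℝ) 1 → t₁ ≤ t₂ →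
      h (θ₁, t₁) = h (θ₂, t₂) → f (θ₁, t₁) = f (θ₂, t₂) := by
    intro θ₁ t₁ θ₂ t₂ ht₁ ht₂ h12 he
    have hall := all_times h hs hper hε₀ hc hm hmle htube hinward ht₁ ht₂ he rfl
    have hall' : ∀ s, ∃ θ, s ∈ Icc t₁ t₂ → h (θ, s) = h (θ₂, t₂) := by
      intro s
      by_cases hsm : s ∈ Icc t₁ t₂
      · obtain ⟨θ, hθ⟩ := hall s hsm
        exact ⟨θ, fun _ => hθ⟩
      · exact ⟨0, fun h => absurd h hsm⟩
    choose Θ hΘ using hall'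
    have hfin := const_along h f hs hfs hper hf_per hc hderiv htube0 hfe ht₁ ht₂ h12 Θ hΘ
    rw [hsame t₁ ht₁ θ₁ (Θ t₁) (he.trans (hΘ t₁ ⟨le_rfl, h12⟩).symm), ← hfin]
    exact hsame t₂ ht₂ _ _ (hΘ t₂ ⟨h12, le_rfl⟩)
  have hkey' : ∀ θ₁ t₁ θ₂ t₂, t₁ ∈ Icc (0:ℝ) 1 → t₂ ∈ Icc (0:ℝ) 1 →
      h (θ₁, t₁) = h (θ₂, t₂) → f (θ₁, t₁) = f (θ₂, t₂) := by
    intro θ₁ t₁ θ₂ t₂ ht₁ ht₂ he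
    rcases le_total t₁ t₂ with h12 | h12
    · exact hkey _ _ _ _ ht₁ ht₂ h12 he
    · exact (hkey _ _ _ _ ht₂ ht₁ h12 he.symm).symm
  have hg : ∀ w, ∃ v, ∀ θ : ℝ, ∀ t ∈ Icc (0:ℝ) 1, h (θ, t) = w → f (θ, t) = v := by
    intro w
    by_cases hw : ∃ θ : ℝ, ∃ t ∈ Icc (0:ℝ) 1, h (θ, t) = w
    · obtain ⟨θ₀, t₀, ht₀, rfl⟩ := hw
      exact ⟨f (θ₀, t₀), fun θ t ht he => hkey' _ _ _ _ ht ht₀ he⟩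
    · exact ⟨0, fun θ t ht he => absurd ⟨θ, t, ht, he⟩ hw⟩
  choose g hg using hg
  have hgf : ∀ θ : ℝ, ∀ t ∈ Icc (0:ℝ) 1, f (θ, t) = g (h (θ, t)) :=
    fun θ t ht => hg _ θ t ht rfl
  refine ⟨g, ?_, hgf, ?_, ?_, ?_⟩
  · rw [continuousOn_iff_isClosed]
    intro C hC
    refine ⟨h '' ((Icc 0 (2 * π) ×ˢ Icc (0:ℝ) 1) ∩ f ⁻¹' C), ?_, ?_⟩
    · exact (((isCompact_Icc.prod isCompact_Icc).inter_right (hC.preimage hfc)).image hcc).isClosed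
    · ext w
      constructor
      · rintro ⟨h1, h2⟩
        refine ⟨?_, h2⟩
        rw [hA] at h2
        obtain ⟨⟨θ, t⟩, ⟨-, ht⟩, rfl⟩ := h2
        obtain ⟨n, hn⟩ := exists_rep θ π
        refine ⟨(θ + n * (2 * π), t), ⟨⟨⟨by linarith [hn.1], by linarith [hn.2]⟩, ht⟩, ?_⟩,
          per_int hper n θ t⟩
        show f (θ + n * (2 * π), t) ∈ C
        rw [per_int hf_per, hgf θ t ht]
        exact h1
      · rintro ⟨⟨⟨θ, t⟩, ⟨⟨-, ht⟩, h1⟩, rfl⟩, h2⟩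
        refine ⟨?_, h2⟩
        show g (h (θ, t)) ∈ C
        rw [← hgf θ t ht]
        exact h1
  · have : (fun θ => g (h (θ, 0))) = fun θ => f (θ, 0) := by
      funext θ; exact (hgf θ 0 (by simp)).symm
    rw [this]
    exact hf_sm.comp (by fun_prop)
  · have : (fun θ => g (h (θ, 1))) = fun θ => f (θ, 1) := by
      funext θ; exact (hgf θ 1 (by simp)).symm
    rw [this]
    exact hf_sm.comp (by fun_prop)
  · intro g' _ hg' w hw
    rw [hA] at hw
    obtain ⟨⟨θ, t⟩, ⟨-, ht⟩, rfl⟩ := hw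
    rw [← hg' θ t ht, hgf θ t ht]
end
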